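/- arXiv:2303.15184 — 7 statements merged into one kernel-verified Lean document; each statement's English description precedes it below -/
import Mathlib

section
/- Under the Darboux-frame hypotheses, for every s ∈ ℝ the derivative at ε = 0 of the squared speed of the varied curve satisfies ∂/∂ε|_{ε=0} ‖∂F/∂s (ε, s)‖² = −2 r(s)² (h₁(s) κ_g(s) + h₂(s) κ_n(s)). -/
/-!
The velocity of the varied curve is affine in `ε`: `∂F/∂s = A + ε B` with `A = r t` and
`B = (h₁ n + h₂ ν)'`. Hence the derivative of its squared norm at `ε = 0` is `2 ⟪A, B⟫`, so only the
tangential component of `B` matters. By the Darboux equations that component is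
`-r (h₁ κ_g + h₂ κ_n)`, since the derivatives of `h₁`, `h₂` and the torsion terms contribute only
multiples of `n` and `ν`.
-/

open scoped RealInnerProductSpace

noncomputable section

local notation "E" => EuclideanSpace ℝ (Fin 3)

/-- Variation of the squared speed under a normal variation of a curve on a surface,
expressed via the Darboux frame:
`∂/∂ε|₀ ‖∂F/∂s(ε,s)‖² = -2 r(s)² (h₁(s) κ_g(s) + h₂(s) κ_n(s))`. -/
theorem variation_of_squared_speed
    (f : ℝ → E) (r κg κn τg h₁ h₂ : ℝ → ℝ) (t n ν : ℝ → E)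
    (hf : ContDiff ℝ (⊤ : ℕ∞) f) (hr : ContDiff ℝ (⊤ : ℕ∞) r) (hκg : ContDiff ℝ (⊤ : ℕ∞) κg)
    (hκn : ContDiff ℝ (⊤ : ℕ∞) κn) (hτg : ContDiff ℝ (⊤ : ℕ∞) τg)
    (hh₁ : ContDiff ℝ (⊤ : ℕ∞) h₁) (hh₂ : ContDiff ℝ (⊤ : ℕ∞) h₂)
    (ht : ContDiff ℝ (⊤ : ℕ∞) t) (hn : ContDiff ℝ (⊤ : ℕ∞) n) (hν : ContDiff ℝ (⊤ : ℕ∞) ν)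
    (hrpos : ∀ s, 0 < r s)
    (ht1 : ∀ s, ‖t s‖ = 1) (hn1 : ∀ s, ‖n s‖ = 1) (hν1 : ∀ s, ‖ν s‖ = 1)
    (htn : ∀ s, ⟪t s, n s⟫ = 0) (htν : ∀ s, ⟪t s, ν s⟫ = 0)
    (hnν : ∀ s, ⟪n s, ν s⟫ = 0)
    (hf' : ∀ s, deriv f s = r s • t s)
    (ht' : ∀ s, deriv t s = r s • (κg s • n s + κn s • ν s))
    (hn' : ∀ s, deriv n s = r s • ((-κg s) • t s + τg s • ν s))
    (hν' : ∀ s, deriv ν s = r s • ((-κn s) • t s + (-τg s) • n s))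
    (F : ℝ → ℝ → E)
    (hF : ∀ ε s, F ε s = f s + ε • (h₁ s • n s + h₂ s • ν s))
    (s : ℝ) :
    deriv (fun ε => ‖deriv (fun x => F ε x) s‖ ^ 2) 0
      = -2 * (r s) ^ 2 * (h₁ s * κg s + h₂ s * κn s) := by
  set B : E := (h₁ s • (r s • ((-κg s) • t s + τg s • ν s)) + deriv h₁ s • n s)
    + (h₂ s • (r s • ((-κn s) • t s + (-τg s) • n s)) + deriv h₂ s • ν s) with hB
  have hd : ∀ {G : Type} [NormedAddCommGroup G] [NormedSpace ℝ G] {g : ℝ → G},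
      ContDiff ℝ (⊤ : ℕ∞) g → HasDerivAt g (deriv g s) s :=
    fun hg => (hg.differentiable (by simp) s).hasDerivAt
  have hvel : ∀ ε, deriv (fun x => F ε x) s = r s • t s + ε • B := by
    intro ε
    have hV := ((hd hh₁).smul (hd hn)).add ((hd hh₂).smul (hd hν))
    have h := (hd hf).add (hV.const_smul ε)
    rw [hf', hn', hν'] at h
    simp only [hF]
    exact h.deriv
  have hline : HasDerivAt (fun ε : ℝ => r s • t s + ε • B) B 0 := by
    simpa using ((hasDerivAt_id (0 : ℝ)).smul_const B).const_add (r s • t s)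
  simp only [hvel]
  rw [hline.norm_sq.deriv]
  simp only [hB, zero_smul, add_zero, inner_add_right, real_inner_smul_left, real_inner_smul_right,
    real_inner_self_eq_norm_sq, ht1, htn, htν]
  ring
end
end

section
/- Under the Darboux-frame hypotheses, for every s ∈ ℝ the derivative at ε = 0 of the speed of the varied curve satisfies ∂/∂ε|_{ε=0} ‖∂F/∂s (ε, s)‖ = −r(s) (h₁(s) κ_g(s) + h₂(s) κ_n(s)). (This is the variation of speed δr = −r(h₁ κ_g + h₂|_C κ_n) from Lemma 5.) -/
/-!
The velocity of the varied curve at `s` is affine in `ε`: it equals `r t + ε W`, where `W` is the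
derivative at `s` of the variation field `h₁ n + h₂ ν`. Since `‖r t‖ = r > 0`, the derivative of
the speed at `ε = 0` is `⟪r t, W⟫ / r = ⟪t, W⟫`, and the Darboux equations with orthonormality
give `⟪t, W⟫ = -r (h₁ κ_g + h₂ κ_n)`.
-/

open scoped RealInnerProductSpace

noncomputable section

local notation "E" => EuclideanSpace ℝ (Fin 3)

/-- Lemma 5 (first part): the variation of the speed under a normal variation
of a curve on a surface is `δr = -r (h₁ κ_g + h₂ κ_n)`. -/
theorem variation_of_speed
    (f : ℝ → E) (r κg κn τg h₁ h₂ : ℝ → ℝ) (t n ν : ℝ → E)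
    (hf : ContDiff ℝ (⊤ : ℕ∞) f) (hr : ContDiff ℝ (⊤ : ℕ∞) r) (hκg : ContDiff ℝ (⊤ : ℕ∞) κg)
    (hκn : ContDiff ℝ (⊤ : ℕ∞) κn) (hτg : ContDiff ℝ (⊤ : ℕ∞) τg)
    (hh₁ : ContDiff ℝ (⊤ : ℕ∞) h₁) (hh₂ : ContDiff ℝ (⊤ : ℕ∞) h₂)
    (ht : ContDiff ℝ (⊤ : ℕ∞) t) (hn : ContDiff ℝ (⊤ : ℕ∞) n) (hν : ContDiff ℝ (⊤ : ℕ∞) ν)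
    (hrpos : ∀ s, 0 < r s)
    (ht1 : ∀ s, ‖t s‖ = 1) (hn1 : ∀ s, ‖n s‖ = 1) (hν1 : ∀ s, ‖ν s‖ = 1)
    (htn : ∀ s, ⟪t s, n s⟫ = 0) (htν : ∀ s, ⟪t s, ν s⟫ = 0)
    (hnν : ∀ s, ⟪n s, ν s⟫ = 0)
    (hf' : ∀ s, deriv f s = r s • t s)
    (ht' : ∀ s, deriv t s = r s • (κg s • n s + κn s • ν s))
    (hn' : ∀ s, deriv n s = r s • ((-κg s) • t s + τg s • ν s))
    (hν' : ∀ s, deriv ν s = r s • ((-κn s) • t s + (-τg s) • n s))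
    (F : ℝ → ℝ → E)
    (hF : ∀ ε s, F ε s = f s + ε • (h₁ s • n s + h₂ s • ν s))
    (s : ℝ) :
    deriv (fun ε => ‖deriv (fun x => F ε x) s‖) 0
      = -(r s) * (h₁ s * κg s + h₂ s * κn s) := by
  have dd {G : Type} [NormedAddCommGroup G] [NormedSpace ℝ G] {g : ℝ → G}
      (hg : ContDiff ℝ (⊤ : ℕ∞) g) : HasDerivAt g (deriv g s) s :=
    (hg.differentiable (by simp) s).hasDerivAt
  obtain ⟨W, hW⟩ : ∃ W, W = (h₁ s • deriv n s + deriv h₁ s • n s)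
      + (h₂ s • deriv ν s + deriv h₂ s • ν s) := ⟨_, rfl⟩
  have hFs : ∀ ε, deriv (fun x => F ε x) s = r s • t s + ε • W := by
    intro ε
    simp only [hF]
    rw [hW, ← hf']
    exact ((dd hf).add ((((dd hh₁).smul (dd hn)).add ((dd hh₂).smul (dd hν))).const_smul ε)).deriv
  simp only [hFs]
  have htt : ⟪t s, t s⟫ = 1 := by rw [real_inner_self_eq_norm_sq, ht1]; norm_num
  -- Only the `t`-components of `n'` and `ν'` contribute to the tangential part of `W`.
  have htW : ⟪t s, W⟫ = -(r s) * (h₁ s * κg s + h₂ s * κn s) := by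
    rw [hW, hn', hν']
    simp only [inner_add_right, real_inner_smul_right, htn, htν, htt]
    ring
  have h0 : ‖r s • t s‖ = r s := by
    rw [norm_smul, ht1, Real.norm_of_nonneg (hrpos s).le, mul_one]
  have hu : HasDerivAt (fun ε : ℝ => r s • t s + ε • W) W 0 := by
    simpa using ((hasDerivAt_id (0 : ℝ)).smul_const W).const_add (r s • t s)
  -- The norm is differentiated as `√(‖·‖ ^ 2)`, which is smooth where `‖·‖ ^ 2 ≠ 0`.
  have hsq := hu.norm_sq.sqrt (by simp [h0, (hrpos s).ne'])
  simp only [Real.sqrt_sq (norm_nonneg _), Real.sqrt_sq (hrpos s).le, zero_smul, add_zero, h0,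
    real_inner_smul_left, htW] at hsq
  rw [hsq.deriv]
  have := (hrpos s).ne'
  field_simp
end
end

section
/- Under the Darboux-frame hypotheses, let t_ε(s) = (∂F/∂s (ε, s)) / ‖∂F/∂s (ε, s)‖ denote the unit tangent of the varied curve (well-defined for ε near 0 since r(s) > 0). Then for every s ∈ ℝ, ∂/∂ε|_{ε=0} t_ε(s) = (h₁'(s)/r(s) − h₂(s) τ_g(s)) n(s) + (h₂'(s)/r(s) + h₁(s) τ_g(s)) ν(s). (This is the variation of the unit tangent δt from Lemma 5.) -/
/-!
The velocity of the varied curve is affine in `ε`: the Darboux equations give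
`∂F/∂s = r t + ε (a t + b n + c ν)` with `a = -r (h₁ κ_g + h₂ κ_n)`, `b = h₁' - r h₂ τ_g` and
`c = h₂' + r h₁ τ_g`. Normalizing `r t + ε (a t + u)`, where `u ⟂ t`, removes the tangential part
to first order, so its derivative at `ε = 0` is `r⁻¹ u` (`hasDerivAt_normalize_affine`).
-/

open scoped RealInnerProductSpace

noncomputable section

local notation "E" => EuclideanSpace ℝ (Fin 3)

/-- The differential of `v ↦ v / ‖v‖` at `r t` is `r⁻¹` times the orthogonal projection onto
the complement of the unit vector `t`; here it is applied to the direction `a t + u`, `u ⟂ t`. -/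
lemma hasDerivAt_normalize_affine {V : Type*} [NormedAddCommGroup V] [InnerProductSpace ℝ V]
    {t u : V} {r : ℝ} (a : ℝ) (hr : 0 < r) (ht : ‖t‖ = 1) (htu : ⟪t, u⟫ = 0) :
    HasDerivAt (fun ε : ℝ => ‖r • t + ε • (a • t + u)‖⁻¹ • (r • t + ε • (a • t + u)))
      (r⁻¹ • u) 0 := by
  have hg : HasDerivAt (fun ε : ℝ => r • t + ε • (a • t + u)) (a • t + u) 0 := by
    simpa using ((hasDerivAt_id (0 : ℝ)).smul_const (a • t + u)).const_add (r • t)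
  have hg0 : ‖r • t + (0 : ℝ) • (a • t + u)‖ = r := by
    simp [norm_smul, ht, abs_of_pos hr]
  have hnorm : HasDerivAt (fun ε : ℝ => ‖r • t + ε • (a • t + u)‖) a 0 := by
    have h := hg.norm_sq.sqrt (by rw [hg0]; positivity)
    simp only [Real.sqrt_sq (norm_nonneg _), hg0] at h
    convert h using 1
    simp only [zero_smul, add_zero, inner_add_right, inner_smul_left, inner_smul_right,
      real_inner_self_eq_norm_sq, ht, htu]
    rw [Real.sqrt_sq hr.le]
    simp
    field_simp
  have h := (hnorm.inv (by rw [hg0]; exact hr.ne')).smul hg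
  refine h.congr_deriv ?_
  simp only [Pi.inv_apply, hg0]
  simp only [zero_smul, add_zero]
  match_scalars <;> field_simp <;> ring

/-- Lemma 5 (second part): the variation of the unit tangent under a normal
variation of a curve on a surface is
`δt = (D_s h₁ - h₂ τ_g) n + (D_s h₂ + h₁ τ_g) ν`. -/
theorem variation_of_unit_tangent
    (f : ℝ → E) (r κg κn τg h₁ h₂ : ℝ → ℝ) (t n ν : ℝ → E)
    (hf : ContDiff ℝ (⊤ : ℕ∞) f) (hr : ContDiff ℝ (⊤ : ℕ∞) r) (hκg : ContDiff ℝ (⊤ : ℕ∞) κg)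
    (hκn : ContDiff ℝ (⊤ : ℕ∞) κn) (hτg : ContDiff ℝ (⊤ : ℕ∞) τg)
    (hh₁ : ContDiff ℝ (⊤ : ℕ∞) h₁) (hh₂ : ContDiff ℝ (⊤ : ℕ∞) h₂)
    (ht : ContDiff ℝ (⊤ : ℕ∞) t) (hn : ContDiff ℝ (⊤ : ℕ∞) n) (hν : ContDiff ℝ (⊤ : ℕ∞) ν)
    (hrpos : ∀ s, 0 < r s)
    (ht1 : ∀ s, ‖t s‖ = 1) (hn1 : ∀ s, ‖n s‖ = 1) (hν1 : ∀ s, ‖ν s‖ = 1)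
    (htn : ∀ s, ⟪t s, n s⟫ = 0) (htν : ∀ s, ⟪t s, ν s⟫ = 0)
    (hnν : ∀ s, ⟪n s, ν s⟫ = 0)
    (hf' : ∀ s, deriv f s = r s • t s)
    (ht' : ∀ s, deriv t s = r s • (κg s • n s + κn s • ν s))
    (hn' : ∀ s, deriv n s = r s • ((-κg s) • t s + τg s • ν s))
    (hν' : ∀ s, deriv ν s = r s • ((-κn s) • t s + (-τg s) • n s))
    (F : ℝ → ℝ → E)
    (hF : ∀ ε s, F ε s = f s + ε • (h₁ s • n s + h₂ s • ν s))
    (s : ℝ) :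
    deriv (fun ε => ‖deriv (fun x => F ε x) s‖⁻¹ • deriv (fun x => F ε x) s) 0
      = (deriv h₁ s / r s - h₂ s * τg s) • n s
        + (deriv h₂ s / r s + h₁ s * τg s) • ν s := by
  have d : ∀ {V : Type} [NormedAddCommGroup V] [NormedSpace ℝ V] {g : ℝ → V},
      ContDiff ℝ (⊤ : ℕ∞) g → HasDerivAt g (deriv g s) s :=
    fun hg => (hg.differentiable (by simp) s).hasDerivAt
  have hvel : ∀ ε, deriv (fun x => F ε x) s = r s • t s + ε •
      ((-(r s * (h₁ s * κg s + h₂ s * κn s))) • t s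
        + ((deriv h₁ s - r s * (h₂ s * τg s)) • n s
          + (deriv h₂ s + r s * (h₁ s * τg s)) • ν s)) := by
    intro ε
    simp only [hF]
    have h := (d hf).add ((((d hh₁).smul (d hn)).add ((d hh₂).smul (d hν))).const_smul ε)
    refine h.deriv.trans ?_
    rw [hf', hn', hν']
    module
  simp only [hvel]
  rw [(hasDerivAt_normalize_affine _ (hrpos s) (ht1 s) (by
    simp [inner_add_right, inner_smul_right, htn, htν])).deriv]
  have hr0 := (hrpos s).ne'
  match_scalars <;> field_simp
end
end

section
/- Under the Darboux-frame hypotheses, let δt(s) := ∂/∂ε|_{ε=0} t_ε(s), where t_ε(s) = (∂F/∂s (ε, s)) / ‖∂F/∂s (ε, s)‖. Then for every s ∈ ℝ, ‖δt(s)‖² = (h₁'(s)/r(s) − h₂(s) τ_g(s))² + (h₂'(s)/r(s) + h₁(s) τ_g(s))², i.e. the squared norm of the variation of the unit tangent equals (D_s h₁ − h₂ τ_g)² + (D_s h₂ + h₁ τ_g)², where D_s φ := φ'/r denotes the arc-length derivative. -/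
/-!
By the Darboux equations, `∂F/∂s (ε, s) = r t + ε W` with
`W = a t + (h₁' - r h₂ τ_g) n + (h₂' + r h₁ τ_g) ν`. The derivative of the normalisation
`u ↦ u / ‖u‖` at `r t` in the direction `W` is `r⁻¹` times the component of `W` orthogonal to `t`
(`hasDerivAt_normalize_line`), so the coefficient `a` drops out and the squared norm is read off
from the orthonormal pair `n, ν`.
-/

open scoped RealInnerProductSpace

noncomputable section

local notation "E" => EuclideanSpace ℝ (Fin 3)

/-- First variation of the normalised vector along the line `ε ↦ r T + ε W` through a positive
multiple of a unit vector `T`: only the part of `W` orthogonal to `T` contributes. -/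
lemma hasDerivAt_normalize_line {r : ℝ} (hr : 0 < r) {T W : E} (hT : ‖T‖ = 1) :
    HasDerivAt (fun ε : ℝ => ‖r • T + ε • W‖⁻¹ • (r • T + ε • W))
      (r⁻¹ • (W - ⟪T, W⟫ • T)) 0 := by
  have hu : HasDerivAt (fun ε : ℝ => r • T + ε • W) W 0 := by
    simpa using ((hasDerivAt_id (0 : ℝ)).smul_const W).const_add (r • T)
  have hnr : ‖r • T‖ = r := by rw [norm_smul, hT, Real.norm_of_nonneg hr.le, mul_one]
  -- The norm is differentiated as the square root of the squared norm.
  have hnorm : HasDerivAt (fun ε : ℝ => ‖r • T + ε • W‖) ⟪T, W⟫ 0 := by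
    have h := hu.norm_sq.sqrt (by simp [hnr, hr.ne'])
    simp only [Real.sqrt_sq (norm_nonneg _), zero_smul, add_zero, hnr,
      real_inner_smul_left, Real.sqrt_sq hr.le] at h
    convert h using 1
    field_simp
  have hinv := hnorm.fun_inv (by simp [hnr, hr.ne'])
  refine (hinv.fun_smul hu).congr_deriv ?_
  simp only [zero_smul, add_zero, hnr]
  match_scalars <;> field_simp

/-- The squared norm of the variation of the unit tangent under a normal
variation of a curve on a surface is
`‖δt‖² = (D_s h₁ - h₂ τ_g)² + (D_s h₂ + h₁ τ_g)²`. -/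
theorem sq_norm_variation_of_unit_tangent
    (f : ℝ → E) (r κg κn τg h₁ h₂ : ℝ → ℝ) (t n ν : ℝ → E)
    (hf : ContDiff ℝ (⊤ : ℕ∞) f) (hr : ContDiff ℝ (⊤ : ℕ∞) r) (hκg : ContDiff ℝ (⊤ : ℕ∞) κg)
    (hκn : ContDiff ℝ (⊤ : ℕ∞) κn) (hτg : ContDiff ℝ (⊤ : ℕ∞) τg)
    (hh₁ : ContDiff ℝ (⊤ : ℕ∞) h₁) (hh₂ : ContDiff ℝ (⊤ : ℕ∞) h₂)
    (ht : ContDiff ℝ (⊤ : ℕ∞) t) (hn : ContDiff ℝ (⊤ : ℕ∞) n) (hν : ContDiff ℝ (⊤ : ℕ∞) ν)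
    (hrpos : ∀ s, 0 < r s)
    (ht1 : ∀ s, ‖t s‖ = 1) (hn1 : ∀ s, ‖n s‖ = 1) (hν1 : ∀ s, ‖ν s‖ = 1)
    (htn : ∀ s, ⟪t s, n s⟫ = 0) (htν : ∀ s, ⟪t s, ν s⟫ = 0)
    (hnν : ∀ s, ⟪n s, ν s⟫ = 0)
    (hf' : ∀ s, deriv f s = r s • t s)
    (ht' : ∀ s, deriv t s = r s • (κg s • n s + κn s • ν s))
    (hn' : ∀ s, deriv n s = r s • ((-κg s) • t s + τg s • ν s))
    (hν' : ∀ s, deriv ν s = r s • ((-κn s) • t s + (-τg s) • n s))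
    (F : ℝ → ℝ → E)
    (hF : ∀ ε s, F ε s = f s + ε • (h₁ s • n s + h₂ s • ν s))
    (s : ℝ) :
    ‖deriv (fun ε => ‖deriv (fun x => F ε x) s‖⁻¹ • deriv (fun x => F ε x) s) 0‖ ^ 2
      = (deriv h₁ s / r s - h₂ s * τg s) ^ 2
        + (deriv h₂ s / r s + h₁ s * τg s) ^ 2 := by
  have d {V : Type} [NormedAddCommGroup V] [NormedSpace ℝ V] {g : ℝ → V}
      (hg : ContDiff ℝ (⊤ : ℕ∞) g) : HasDerivAt g (deriv g s) s :=
    (hg.differentiable (by simp) s).hasDerivAt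
  set b : ℝ := deriv h₁ s - r s * (h₂ s * τg s) with hb
  set c : ℝ := deriv h₂ s + r s * (h₁ s * τg s) with hc
  set W : E := (r s * (-(h₁ s * κg s) - h₂ s * κn s)) • t s + b • n s + c • ν s with hW
  have hder (ε : ℝ) : deriv (fun x => F ε x) s = r s • t s + ε • W := by
    simp only [hF]
    have h := (d hf).fun_add
      ((((d hh₁).fun_smul (d hn)).fun_add ((d hh₂).fun_smul (d hν))).fun_const_smul ε)
    rw [h.deriv, hf', hn', hν', hW, hb, hc]
    module
  have htt : ⟪t s, t s⟫ = 1 := by rw [real_inner_self_eq_norm_sq, ht1, one_pow]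
  have hproj : W - ⟪t s, W⟫ • t s = b • n s + c • ν s := by
    simp only [hW, inner_add_right, real_inner_smul_right, htt, htn, htν]
    module
  have hr0 := (hrpos s).ne'
  simp only [hder]
  rw [(hasDerivAt_normalize_line (hrpos s) (ht1 s)).deriv, hproj, norm_smul, mul_pow,
    norm_add_sq_real, norm_smul, norm_smul, hn1, hν1, real_inner_smul_left,
    real_inner_smul_right, hnν]
  simp only [Real.norm_eq_abs, mul_one, sq_abs, hb, hc]
  field_simp
  ring
end
end

section
/- Let f : ℝ → E be smooth with f'(s) ≠ 0 for all s, let h : ℝ → E be smooth, set r = ‖f'‖, t = f'/r, D_s h = h'/r, and for the variation f_ε = f + ε h set δr(s) = ∂/∂ε|_{ε=0} ‖f_ε'(s)‖ and δt(s) = ∂/∂ε|_{ε=0} (f_ε'(s)/‖f_ε'(s)‖). Then for all real a, b and all 0 ≤ α ≤ β, ∫_α^β [ a ⟨D_s h, t⟩² + b ‖D_s h − ⟨D_s h, t⟩ t‖² ] r ds = ∫_α^β [ a (δr/r)² + b ‖δt‖² ] r ds. (This is the identity expressing the elastic metric g^{a,b}_f(δf, δf) as a ∫ (δr/r)² dℓ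 + b ∫ ‖δt‖² dℓ.) -/
/-!
The two integrands agree pointwise. Since `f_ε' = f' + ε h'`, the variations at a fixed `s` are
derivatives along the line `ε ↦ v + ε w` with `v = f' s ≠ 0` and `w = h' s`. The derivative of the
norm gives `δr = ⟪v, w⟫ / ‖v‖`, hence `δr / r = ⟪D_s h, t⟫`, and the quotient rule gives
`δt = w / ‖v‖ - (⟪v, w⟫ / ‖v‖³) v`, which is the normal part of `D_s h`.
-/


open scoped RealInnerProductSpace

noncomputable section

local notation "E" => EuclideanSpace ℝ (Fin 3)

section LineDerivatives

variable {F : Type*} [NormedAddCommGroup F] [InnerProductSpace ℝ F]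

lemma hasDerivAt_norm_add_smul (v w : F) (hv : v ≠ 0) :
    HasDerivAt (fun ε : ℝ => ‖v + ε • w‖) (⟪v, w⟫ / ‖v‖) 0 := by
  have hline : HasDerivAt (fun ε : ℝ => v + ε • w) w 0 := by
    simpa using ((hasDerivAt_id (0 : ℝ)).smul_const w).const_add v
  -- Differentiate `‖·‖ = √(‖·‖²)`, which is smooth away from the origin.
  have hsqrt := hline.norm_sq.sqrt (by simpa using hv)
  simp only [Real.sqrt_sq (norm_nonneg _), zero_smul, add_zero] at hsqrt
  convert hsqrt using 1
  rw [mul_div_mul_left _ _ two_ne_zero]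

lemma hasDerivAt_normalize_add_smul (v w : F) (hv : v ≠ 0) :
    HasDerivAt (fun ε : ℝ => ‖v + ε • w‖⁻¹ • (v + ε • w))
      (‖v‖⁻¹ • w - (⟪v, w⟫ / ‖v‖ ^ 3) • v) 0 := by
  have hline : HasDerivAt (fun ε : ℝ => v + ε • w) w 0 := by
    simpa using ((hasDerivAt_id (0 : ℝ)).smul_const w).const_add v
  have hinv := (hasDerivAt_norm_add_smul v w hv).fun_inv (by simpa using hv)
  convert hinv.fun_smul hline using 1
  simp only [zero_smul, add_zero]
  rw [sub_eq_add_neg, ← neg_smul]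
  congr 2
  have hn : ‖v‖ ≠ 0 := norm_ne_zero_iff.mpr hv
  field_simp

end LineDerivatives

/-- The elastic metric `g^{a,b}_f(δf, δf) = ∫ [a (D_s h^∥)² + b ‖D_s h^⊥‖²] dℓ`
equals `a ∫ (δr/r)² dℓ + b ∫ ‖δt‖² dℓ`, where `δr` and `δt` are the variations of
the speed and of the unit tangent under the variation `f_ε = f + ε h`. -/
theorem elastic_metric_eq_variation_form
    (f h : ℝ → E) (hf : ContDiff ℝ (⊤ : ℕ∞) f) (hh : ContDiff ℝ (⊤ : ℕ∞) h)
    (hreg : ∀ s, deriv f s ≠ 0)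
    (r : ℝ → ℝ) (hr : ∀ s, r s = ‖deriv f s‖)
    (t : ℝ → E) (ht : ∀ s, t s = (r s)⁻¹ • deriv f s)
    (Dsh : ℝ → E) (hDsh : ∀ s, Dsh s = (r s)⁻¹ • deriv h s)
    (δr : ℝ → ℝ)
    (hδr : ∀ s, δr s = deriv (fun ε : ℝ => ‖deriv (fun x => f x + ε • h x) s‖) 0)
    (δt : ℝ → E)
    (hδt : ∀ s, δt s = deriv (fun ε : ℝ => ‖deriv (fun x => f x + ε • h x) s‖⁻¹
            • deriv (fun x => f x + ε • h x) s) 0)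
    (a b : ℝ) (α β : ℝ) (hα : 0 ≤ α) (hαβ : α ≤ β) :
    ∫ s in α..β,
        (a * ⟪Dsh s, t s⟫ ^ 2 + b * ‖Dsh s - ⟪Dsh s, t s⟫ • t s‖ ^ 2) * r s
      = ∫ s in α..β, (a * (δr s / r s) ^ 2 + b * ‖δt s‖ ^ 2) * r s := by
  have hvar : ∀ s ε : ℝ, deriv (fun x => f x + ε • h x) s = deriv f s + ε • deriv h s := by
    intro s ε
    have hf' := (hf.differentiable (by simp) s).hasDerivAt
    have hh' := (hh.differentiable (by simp) s).hasDerivAt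
    exact (hf'.add (hh'.const_smul ε)).deriv
  congr 1
  funext s
  have hn : ‖deriv f s‖ ≠ 0 := norm_ne_zero_iff.mpr (hreg s)
  have hr_var : δr s = ⟪deriv f s, deriv h s⟫ / ‖deriv f s‖ := by
    rw [hδr]
    simp only [hvar]
    exact (hasDerivAt_norm_add_smul _ _ (hreg s)).deriv
  have ht_var : δt s = ‖deriv f s‖⁻¹ • deriv h s
      - (⟪deriv f s, deriv h s⟫ / ‖deriv f s‖ ^ 3) • deriv f s := by
    rw [hδt]
    simp only [hvar]
    exact (hasDerivAt_normalize_add_smul _ _ (hreg s)).deriv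
  have htangential : ⟪Dsh s, t s⟫ = δr s / r s := by
    rw [hDsh, ht, hr_var, hr, real_inner_smul_left, real_inner_smul_right, real_inner_comm]
    field_simp
  have hnormal : Dsh s - ⟪Dsh s, t s⟫ • t s = δt s := by
    rw [htangential, hDsh, ht, ht_var, hr_var, hr, smul_smul]
    congr 2
    field_simp
  rw [hnormal, htangential]
end
end

section
/- Let F : ℝ² → E be smooth, let ν : ℝ² → E be smooth with ‖ν(p)‖ = 1 and ⟨∂_u F(p), ν(p)⟩ = 0 and ⟨∂_v F(p), ν(p)⟩ = 0 for all p, let h : ℝ² → ℝ be smooth, and consider the normal variation F_ε = F + ε h ν. Then for each pair of coordinate directions i, j ∈ {u, v} and each point p, the derivative at ε = 0 of the induced metric coefficient satisfies ∂/∂ε|_{ε=0} ⟨∂_i F_ε(p), ∂_j F_ε(p)⟩ = h(p) ( ⟨∂_i F(p), ∂_j ν(p)⟩ + ⟨∂_j F(p), ∂_i ν(p)⟩ ). (This is the variation of the induced metric δg under a normal variation, giving δg = −2 h II.) -/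
/-!
The partial derivatives of the varied map are affine in `ε`:
`∂_k F_ε = ∂_k F + ε (h ∂_k ν + (∂_k h) ν)` (`pd_normal_variation`). Hence the derivative at
`ε = 0` of the metric coefficient is
`⟪∂_i F, h ∂_j ν + (∂_j h) ν⟫ + ⟪h ∂_i ν + (∂_i h) ν, ∂_j F⟫`, and the terms containing `ν`
itself vanish because `ν` is orthogonal to `∂_i F` and `∂_j F`.
-/

open scoped RealInnerProductSpace

noncomputable section

local notation "E" => EuclideanSpace ℝ (Fin 3)

/-- The two coordinate directions of `ℝ²`. -/
def dir : Fin 2 → ℝ × ℝ := ![(1, 0), (0, 1)]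

/-- Partial derivative of a map on `ℝ²` in the `i`-th coordinate direction. -/
def pd {V : Type*} [NormedAddCommGroup V] [NormedSpace ℝ V]
    (G : ℝ × ℝ → V) (i : Fin 2) (p : ℝ × ℝ) : V :=
  fderiv ℝ G p (dir i)

/-- The partial derivatives of `F + ε h ν` are affine in `ε`, with slope `∂_k (h ν)`. -/
lemma pd_normal_variation {V : Type*} [NormedAddCommGroup V] [NormedSpace ℝ V]
    {F ν : ℝ × ℝ → V} {h : ℝ × ℝ → ℝ} {p : ℝ × ℝ}
    (hF : DifferentiableAt ℝ F p) (hν : DifferentiableAt ℝ ν p) (hh : DifferentiableAt ℝ h p)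
    (k : Fin 2) (ε : ℝ) :
    pd (fun q => F q + ε • h q • ν q) k p
      = pd F k p + ε • (h p • pd ν k p + pd h k p • ν p) := by
  have H := hF.hasFDerivAt.add ((hh.hasFDerivAt.smul hν.hasFDerivAt).const_smul ε)
  have hfd : fderiv ℝ (fun q => F q + ε • h q • ν q) p = _ := H.fderiv
  simp [pd, hfd]

/-- Variation of the induced metric under a normal variation `F_ε = F + ε h ν`:
`∂/∂ε|₀ ⟨∂_i F_ε, ∂_j F_ε⟩ = h (⟨∂_i F, ∂_j ν⟩ + ⟨∂_j F, ∂_i ν⟩)`,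
i.e. `δg = -2 h II`. -/
theorem variation_of_induced_metric
    (F ν : ℝ × ℝ → E) (h : ℝ × ℝ → ℝ)
    (hF : ContDiff ℝ (⊤ : ℕ∞) F) (hν : ContDiff ℝ (⊤ : ℕ∞) ν) (hh : ContDiff ℝ (⊤ : ℕ∞) h)
    (hν1 : ∀ p, ‖ν p‖ = 1)
    (hperp : ∀ p (i : Fin 2), ⟪pd F i p, ν p⟫ = 0)
    (i j : Fin 2) (p : ℝ × ℝ) :
    deriv (fun ε : ℝ =>
        ⟪pd (fun q => F q + ε • h q • ν q) i p,
         pd (fun q => F q + ε • h q • ν q) j p⟫) 0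
      = h p * (⟪pd F i p, pd ν j p⟫ + ⟪pd F j p, pd ν i p⟫) := by
  have dF : DifferentiableAt ℝ F p := hF.differentiable (by simp) p
  have dν : DifferentiableAt ℝ ν p := hν.differentiable (by simp) p
  have dh : DifferentiableAt ℝ h p := hh.differentiable (by simp) p
  simp only [pd_normal_variation dF dν dh]
  have affine (a b : E) : HasDerivAt (fun ε : ℝ => a + ε • b) b 0 := by
    simpa using ((hasDerivAt_id (0 : ℝ)).smul_const b).const_add a
  rw [((affine _ _).inner ℝ (affine _ _)).deriv]
  have hj : ⟪ν p, pd F j p⟫ = 0 := by rw [real_inner_comm]; exact hperp p j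
  simp only [zero_smul, add_zero, inner_add_left, inner_add_right, real_inner_smul_left,
    real_inner_smul_right, hperp, hj, real_inner_comm (pd F j p) (pd ν i p)]
  ring
end
end

section
/- Let F : ℝ² → ℝ³ be a smooth immersion (∂_u F(p) and ∂_v F(p) are linearly independent for every p), let g(p) be the first fundamental form matrix g_{ij} = ⟨∂_i F, ∂_j F⟩, let ν = (∂_u F × ∂_v F)/‖∂_u F × ∂_v F‖, let h : ℝ² → ℝ be smooth, and for F_ε = F + ε h ν let ν_ε = (∂_u F_ε × ∂_v F_ε)/‖∂_u F_ε × ∂_v F_ε‖. Then at every point p, ‖∂/∂ε|_{ε=0} ν_ε(p)‖² = Σ_{i,j ∈ {u,v}} ∂_i h(p) (g(p)⁻¹)_{ij} ∂_j h(p), i.e. the squared Euclidean norm of the variation of the unit normal equals the squared norm |∇h|² of the gradient of h with respect to the induced metric. (This is Lemma 6: |δν| = |∇h|.) -/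
/-!
Write `a = ∂_u F`, `b = ∂_v F`, `N = a × b`. The tangent vectors of `F_ε` are `a + ε c` and `b + ε d`
with `c = h_u ν + h ν_u` and `d = h_v ν + h ν_v`, so `∂_u F_ε × ∂_v F_ε` is a quadratic polynomial in
`ε` with linear coefficient `W = c × b + a × d`. Differentiating the normalization gives
`δν = W^⊥ / ‖N‖`, with `W^⊥` the component orthogonal to `N`; by Lagrange's identity
`‖δν‖² = ‖W × N‖² / ‖N‖⁴` (`norm_sq_deriv_normalize`, `lagrange_cross3`).

Since `a`, `b`, `ν_u`, `ν_v` are all orthogonal to `N`, the terms with `ν_u`, `ν_v` contribute only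
multiples of `N` to `W`, and `W × N = ‖N‖ (h_u b - h_v a)` (`cross3_variation`). Hence
`‖δν‖² = ‖h_u b - h_v a‖² / ‖N‖²`, which is `|∇h|²` because `det g = ‖N‖²`.
-/

open scoped RealInnerProductSpace

noncomputable section

local notation "E" => EuclideanSpace ℝ (Fin 3)

/-- The cross product on `ℝ³ = EuclideanSpace ℝ (Fin 3)`. -/
def cross3 (v w : E) : E :=
  (WithLp.equiv 2 (Fin 3 → ℝ)).symm
    ![v 1 * w 2 - v 2 * w 1, v 2 * w 0 - v 0 * w 2, v 0 * w 1 - v 1 * w 0]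

/-- The first fundamental form matrix `g_{ij} = ⟨∂_i F, ∂_j F⟩` of a
parameterized surface `F`. -/
def fff (F : ℝ × ℝ → E) (p : ℝ × ℝ) : Matrix (Fin 2) (Fin 2) ℝ :=
  Matrix.of fun i j => ⟪pd F i p, pd F j p⟫

lemma inner_E (v w : E) : ⟪v, w⟫ = v 0 * w 0 + v 1 * w 1 + v 2 * w 2 := by
  simp [PiLp.inner_apply, Fin.sum_univ_three]
  ring

lemma cross3_zero (v w : E) : cross3 v w 0 = v 1 * w 2 - v 2 * w 1 := rfl

lemma cross3_one (v w : E) : cross3 v w 1 = v 2 * w 0 - v 0 * w 2 := rfl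

lemma cross3_two (v w : E) : cross3 v w 2 = v 0 * w 1 - v 1 * w 0 := rfl

lemma lagrange_cross3 (v w : E) :
    ‖cross3 v w‖ ^ 2 = ‖v‖ ^ 2 * ‖w‖ ^ 2 - ⟪v, w⟫ ^ 2 := by
  simp only [← real_inner_self_eq_norm_sq, inner_E, cross3_zero, cross3_one, cross3_two]
  ring

lemma inner_cross3_left (a b : E) : ⟪a, cross3 a b⟫ = 0 := by
  simp only [inner_E, cross3_zero, cross3_one, cross3_two]
  ring

lemma inner_cross3_right (a b : E) : ⟪b, cross3 a b⟫ = 0 := by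
  simp only [inner_E, cross3_zero, cross3_one, cross3_two]
  ring

/-- If `a × b = 0`, then Cauchy–Schwarz is an equality for `a` and `b` by Lagrange's identity, and
`⟨a, b⟩ a - ‖a‖² b = 0` is a linear dependence. -/
lemma cross3_ne_zero {a b : E} (hab : LinearIndependent ℝ ![a, b]) : cross3 a b ≠ 0 := by
  intro h0
  have hL := lagrange_cross3 a b
  rw [h0, norm_zero] at hL
  have ha : a ≠ 0 := hab.ne_zero 0
  rw [LinearIndependent.pair_iff] at hab
  have h1 : ‖⟪a, b⟫ • a - ‖a‖ ^ 2 • b‖ ^ 2 = 0 := by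
    simp only [← real_inner_self_eq_norm_sq, inner_sub_left, inner_sub_right, inner_smul_left,
      inner_smul_right, real_inner_comm a b] at hL ⊢
    simp only [conj_trivial]
    linear_combination (-⟪a, a⟫) * hL
  have h2 : ⟪a, b⟫ • a + (-‖a‖ ^ 2) • b = 0 := by
    rw [neg_smul, ← sub_eq_add_neg]
    simpa using h1
  have h3 := (hab _ _ h2).2
  exact ha (by simpa using h3)

/-- Bilinearity of the cross product along a pair of lines. -/
lemma cross3_add_smul (a b c d : E) (ε : ℝ) :
    cross3 (a + ε • c) (b + ε • d)
      = cross3 a b + ε • (cross3 c b + cross3 a d) + ε ^ 2 • cross3 c d := by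
  ext i
  fin_cases i <;>
    simp only [Fin.zero_eta, Fin.mk_one, Fin.reduceFinMk, PiLp.add_apply, PiLp.smul_apply,
      smul_eq_mul, cross3_zero, cross3_one, cross3_two] <;> ring

/-- The triple product expansion `(x × y) × z = ⟨x, z⟩ y - ⟨y, z⟩ x`. -/
lemma cross3_cross3 (x y z : E) :
    cross3 (cross3 x y) z = ⟪x, z⟫ • y - ⟪y, z⟫ • x := by
  ext i
  fin_cases i <;>
    simp only [Fin.zero_eta, Fin.mk_one, Fin.reduceFinMk, PiLp.sub_apply, PiLp.smul_apply,
      smul_eq_mul, cross3_zero, cross3_one, cross3_two, inner_E] <;> ring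

lemma cross3_add_left (x y z : E) : cross3 (x + y) z = cross3 x z + cross3 y z := by
  ext i
  fin_cases i <;>
    simp only [Fin.zero_eta, Fin.mk_one, Fin.reduceFinMk, PiLp.add_apply,
      cross3_zero, cross3_one, cross3_two] <;> ring

/-- The linear coefficient `c × b + a × d` of the varied normal, crossed with `N = a × b`, depends
on `c` and `d` only through their components along `N`. -/
lemma cross3_variation (a b c d : E) :
    cross3 (cross3 c b + cross3 a d) (cross3 a b)
      = ⟪c, cross3 a b⟫ • b - ⟪d, cross3 a b⟫ • a := by
  rw [cross3_add_left, cross3_cross3, cross3_cross3, inner_cross3_left, inner_cross3_right]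
  simp [sub_eq_add_neg]

lemma DifferentiableAt.cross3 {G H : ℝ × ℝ → E} {p : ℝ × ℝ} (hG : DifferentiableAt ℝ G p)
    (hH : DifferentiableAt ℝ H p) : DifferentiableAt ℝ (fun q => cross3 (G q) (H q)) p := by
  rw [differentiableAt_euclidean] at hG hH ⊢
  have g0 := hG 0
  have g1 := hG 1
  have g2 := hG 2
  have k0 := hH 0
  have k1 := hH 1
  have k2 := hH 2
  intro i
  fin_cases i <;>
    simp only [Fin.zero_eta, Fin.mk_one, Fin.reduceFinMk, cross3_zero, cross3_one, cross3_two] <;>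
    fun_prop

/-- The derivative of `w / ‖w‖` is the component of `w'` orthogonal to `w`, divided by `‖w‖`; this
is its squared norm, with denominators cleared. -/
lemma norm_sq_deriv_normalize {w : ℝ → E} {w' : E} {t : ℝ} (hw : HasDerivAt w w' t)
    (h0 : w t ≠ 0) :
    ‖deriv (fun s => ‖w s‖⁻¹ • w s) t‖ ^ 2 * (‖w t‖ ^ 2) ^ 2
      = ‖w'‖ ^ 2 * ‖w t‖ ^ 2 - ⟪w', w t⟫ ^ 2 := by
  have hn : ‖w t‖ ≠ 0 := norm_ne_zero_iff.mpr h0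
  have hsq : HasDerivAt (fun s => ‖w s‖) (2 * ⟪w t, w'⟫ / (2 * ‖w t‖)) t := by
    have := (hw.norm_sq).sqrt (pow_ne_zero 2 hn)
    simpa [Real.sqrt_sq (norm_nonneg _)] using this
  have hd := ((hsq.inv hn).smul hw).deriv
  have hd' : deriv (fun s => ‖w s‖⁻¹ • w s) t
      = ‖w t‖⁻¹ • w' + (-(2 * ⟪w t, w'⟫ / (2 * ‖w t‖)) / ‖w t‖ ^ 2) • w t := hd
  rw [hd', ← real_inner_self_eq_norm_sq (_ + _)]
  simp only [inner_add_left, inner_add_right, inner_smul_left, inner_smul_right, conj_trivial,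
    real_inner_comm (w t) w', real_inner_self_eq_norm_sq]
  field_simp
  ring

lemma hasDerivAt_quadratic {V : Type*} [NormedAddCommGroup V] [NormedSpace ℝ V] (x y z : V) :
    HasDerivAt (fun ε : ℝ => x + ε • y + ε ^ 2 • z) y 0 := by
  have := (((hasDerivAt_id (0 : ℝ)).smul_const y).const_add x).add
    ((hasDerivAt_pow 2 (0 : ℝ)).smul_const z)
  convert this using 1
  · rfl
  · simp

/-- A differentiable unit vector field is orthogonal to its derivatives. -/
lemma inner_pd_eq_zero {n : ℝ × ℝ → E} {p : ℝ × ℝ} (hn : DifferentiableAt ℝ n p)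
    (h1 : ∀ q, ‖n q‖ = 1) (i : Fin 2) : ⟪pd n i p, n p⟫ = 0 := by
  have hc : (fun q => ⟪n q, n q⟫) = fun _ => (1 : ℝ) := by
    funext q
    rw [real_inner_self_eq_norm_sq, h1, one_pow]
  have hf := fderiv_inner_apply ℝ hn hn (dir i)
  rw [hc, real_inner_comm] at hf
  simp only [fderiv_fun_const, Pi.zero_apply, _root_.zero_apply] at hf
  rw [pd]
  linarith

lemma pd_variation {F n : ℝ × ℝ → E} {h : ℝ × ℝ → ℝ} {p : ℝ × ℝ} (hF : DifferentiableAt ℝ F p)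
    (hh : DifferentiableAt ℝ h p) (hn : DifferentiableAt ℝ n p) (ε : ℝ) (i : Fin 2) :
    pd (fun q => F q + ε • h q • n q) i p
      = pd F i p + ε • (pd h i p • n p + h p • pd n i p) := by
  have := (hF.hasFDerivAt.add ((hh.hasFDerivAt.smul hn.hasFDerivAt).const_smul ε)).fderiv
  have h2 : fderiv ℝ (fun q => F q + ε • h q • n q) p = _ := this
  rw [pd, h2]
  simp [pd, add_comm]

/-- Lemma 6: for a normal variation `F_ε = F + ε h ν` of an immersed surface,
the squared Euclidean norm of the variation of the unit normal equals the
squared norm of the gradient of `h` with respect to the induced metric: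
`‖δν‖² = |∇h|² = ∑_{i,j} ∂_i h (g⁻¹)_{ij} ∂_j h`. -/
theorem sq_norm_variation_of_unit_normal
    (F : ℝ × ℝ → E) (h : ℝ × ℝ → ℝ)
    (hF : ContDiff ℝ (⊤ : ℕ∞) F) (hh : ContDiff ℝ (⊤ : ℕ∞) h)
    (himm : ∀ p, LinearIndependent ℝ ![pd F 0 p, pd F 1 p])
    (ν : ℝ × ℝ → E)
    (hν : ∀ p, ν p = ‖cross3 (pd F 0 p) (pd F 1 p)‖⁻¹ •
        cross3 (pd F 0 p) (pd F 1 p))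
    (νε : ℝ → ℝ × ℝ → E)
    (hνε : ∀ (ε : ℝ) p, νε ε p =
      ‖cross3 (pd (fun q => F q + ε • h q • ν q) 0 p)
          (pd (fun q => F q + ε • h q • ν q) 1 p)‖⁻¹ •
        cross3 (pd (fun q => F q + ε • h q • ν q) 0 p)
          (pd (fun q => F q + ε • h q • ν q) 1 p))
    (p : ℝ × ℝ) :
    ‖deriv (fun ε => νε ε p) 0‖ ^ 2
      = ∑ i : Fin 2, ∑ j : Fin 2,
          pd h i p * (fff F p)⁻¹ i j * pd h j p := by
  have hFd : Differentiable ℝ F := hF.differentiable (by simp)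
  have hhd : Differentiable ℝ h := hh.differentiable (by simp)
  have hpd : ∀ i, Differentiable ℝ (pd F i) := fun i => by
    have h1 : ContDiff ℝ 1 (fderiv ℝ F) := hF.fderiv_right (by norm_cast)
    exact (h1.differentiable (by simp)).clm_apply (differentiable_const _)
  have hN0 : ∀ q, cross3 (pd F 0 q) (pd F 1 q) ≠ 0 := fun q => cross3_ne_zero (himm q)
  have hNd : DifferentiableAt ℝ (fun q => cross3 (pd F 0 q) (pd F 1 q)) p :=
    (hpd 0 p).cross3 (hpd 1 p)
  have hνd : DifferentiableAt ℝ ν p := by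
    rw [funext hν]
    exact ((hNd.norm ℝ (hN0 p)).inv (norm_ne_zero_iff.mpr (hN0 p))).smul hNd
  have hν1 : ∀ q, ‖ν q‖ = 1 := fun q => by
    rw [hν, norm_smul, norm_inv, norm_norm, inv_mul_cancel₀ (norm_ne_zero_iff.mpr (hN0 q))]
  have hort := inner_pd_eq_zero hνd hν1
  have hfun : (fun ε => νε ε p) = _ := funext fun ε => hνε ε p
  simp only [pd_variation (hFd p) (hhd p) hνd] at hfun
  rw [hfun]
  set a := pd F 0 p with ha
  set b := pd F 1 p with hb
  set N := cross3 a b with hN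
  set c := pd h 0 p • ν p + h p • pd ν 0 p with hc
  set d := pd h 1 p • ν p + h p • pd ν 1 p with hd
  simp only [cross3_add_smul, ← hN]
  have hn : ‖N‖ ≠ 0 := norm_ne_zero_iff.mpr (hN0 p)
  have hNν : N = ‖N‖ • ν p := by rw [hν p, smul_inv_smul₀ hn]
  have hcd : ∀ i, ⟪pd h i p • ν p + h p • pd ν i p, N⟫ = pd h i p * ‖N‖ := fun i => by
    have h1 : ⟪ν p, ν p⟫ = 1 := by rw [real_inner_self_eq_norm_sq, hν1, one_pow]
    rw [hNν, inner_smul_right, inner_add_left, inner_smul_left, inner_smul_left, hort, h1, ← hNν]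
    simp [mul_comm]
  have hder : HasDerivAt (fun ε : ℝ => N + ε • (cross3 c b + cross3 a d) + ε ^ 2 • cross3 c d)
      (cross3 c b + cross3 a d) 0 :=
    hasDerivAt_quadratic _ _ _
  have hmain := norm_sq_deriv_normalize hder (by simpa using hN0 p)
  have hdet : ‖N‖ ^ 2 = ⟪a, a⟫ * ⟪b, b⟫ - ⟪a, b⟫ ^ 2 := by
    rw [hN, lagrange_cross3, real_inner_self_eq_norm_sq, real_inner_self_eq_norm_sq]
  simp only [zero_smul, add_zero, ne_eq, OfNat.ofNat_ne_zero, not_false_eq_true, zero_pow]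
    at hmain
  rw [← lagrange_cross3, hN, cross3_variation, ← hN, hcd 0, hcd 1,
    ← real_inner_self_eq_norm_sq (_ - _)] at hmain
  simp only [inner_sub_left, inner_sub_right, inner_smul_left, inner_smul_right, conj_trivial,
    real_inner_comm a b] at hmain
  have hdet' : (fff F p).det = ‖N‖ ^ 2 := by
    rw [hdet, Matrix.det_fin_two]
    simp only [fff, Matrix.of_apply, ← ha, ← hb, real_inner_comm a b]
    ring
  have hinv : (fff F p)⁻¹ = (‖N‖ ^ 2)⁻¹ • !![⟪b, b⟫, -⟪a, b⟫; -⟪a, b⟫, ⟪a, a⟫] := by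
    rw [Matrix.inv_def, hdet', Ring.inverse_eq_inv', Matrix.adjugate_fin_two]
    simp only [fff, Matrix.of_apply, ← ha, ← hb, real_inner_comm a b]
  rw [hinv]
  simp only [Fin.sum_univ_two, Matrix.smul_apply, Matrix.of_apply, Matrix.cons_val_zero,
    Matrix.cons_val_one, Matrix.cons_val', Matrix.cons_val_fin_one, smul_eq_mul]
  refine mul_right_cancel₀ (pow_ne_zero 2 (pow_ne_zero 2 hn)) (hmain.trans ?_)
  field_simp
  ring
end
end
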